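/- Let Ω ⊇ k be algebraically closed fields and let V be a scheme separated and of finite type over Ω. Suppose there exist intermediate fields K₁ and K₂ with k ⊆ Kᵢ ⊆ Ω, each finitely generated as a field extension of k, that are linearly disjoint over k (the multiplication map K₁ ⊗ₖ K₂ → Ω is injective), and suppose that for i = 1, 2 there exists a scheme Vᵢ separated and of finite type over Kᵢ together with an isomorphism V ≅ Vᵢ ×_{Spec Kᵢ} Spec Ω of Ω-schemes. Then there exists a scheme V₀ separated and of finite type over k together with an isomorphism V ≅ V₀ ×_{Spec k} Spec Ω of Ω-schemes. -/

import Mathlib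

open AlgebraicGeometry CategoryTheory CategoryTheory.Limits
open scoped TensorProduct

/-!
Write `A ⊗ A'` for the tensor product over `k`. By spreading out, `V` has a model `Xᵢ` over a
finitely generated `k`-subalgebra `Aᵢ` of `Kᵢ`, and linear disjointness embeds `A₁ ⊗ A₂` into `Ω`.
The base changes of `X₁` and `X₂` to `Ω` are isomorphic, so they are already isomorphic over a
finitely generated `A₁ ⊗ A₂`-subalgebra `C` of `Ω`. By Chevalley's theorem the image of `Spec C` in
`Spec (A₁ ⊗ A₂)` contains a nonempty open subset, and hence meets the fibre over a general closed
point `π : A₂ → k` in the generic point of `Spec A₁`: there is a map `C → Ω` which is the inclusion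
on `A₁` and factors through `π` on `A₂`. Base change along it of the isomorphism over `C` turns
`X₁ ×_{A₁} Ω ≅ V` into the base change to `Ω` of the fibre of `X₂` at `π`, a scheme over `k`.
-/

universe u

/-! ### Specialization at a closed point -/

section Specialization

lemma nonempty_algHom_of_finiteType (K A Ω : Type*) [Field K] [CommRing A] [Nontrivial A]
    [Algebra K A] [Algebra.FiniteType K A] [Field Ω] [IsAlgClosed Ω] [Algebra K Ω] :
    Nonempty (A →ₐ[K] Ω) := by
  obtain ⟨m, hm⟩ := Ideal.exists_maximal A
  let _ : Field (A ⧸ m) := Ideal.Quotient.field m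
  have : Module.Finite K (A ⧸ m) := finite_of_finite_type_of_isJacobsonRing K (A ⧸ m)
  exact ⟨(IsAlgClosed.lift : A ⧸ m →ₐ[K] Ω).comp (Ideal.Quotient.mkₐ K m)⟩

lemma exists_algHom_apply_ne_zero {K A : Type*} (Ω : Type*) [Field K] [CommRing A] [Algebra K A]
    [Algebra.FiniteType K A] [Field Ω] [IsAlgClosed Ω] [Algebra K Ω] {a : A}
    (ha : ¬ IsNilpotent a) : ∃ φ : A →ₐ[K] Ω, φ a ≠ 0 := by
  have : Nontrivial (Localization.Away a) := by
    rwa [← not_subsingleton_iff_nontrivial, IsLocalization.subsingleton_iff (M := .powers a),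
      Submonoid.mem_powers_iff]
  obtain ⟨ψ⟩ := nonempty_algHom_of_finiteType K (Localization.Away a) Ω
  exact ⟨ψ.comp (IsScalarTower.toAlgHom K A _),
    ((IsLocalization.Away.algebraMap_isUnit a).map ψ).ne_zero⟩

lemma exists_algHom_lTensor_apply_ne_zero {k M A : Type*} [Field k] [IsAlgClosed k]
    [AddCommGroup M] [Module k M] [CommRing A] [IsReduced A] [Algebra k A] [Algebra.FiniteType k A]
    {t : M ⊗[k] A} (ht : t ≠ 0) : ∃ π : A →ₐ[k] k, π.toLinearMap.lTensor M t ≠ 0 := by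
  classical
  let b := Module.Basis.ofVectorSpace k M
  obtain ⟨i, hi⟩ : ∃ i, TensorProduct.equivFinsuppOfBasisLeft b t i ≠ 0 :=
    Finsupp.ne_iff.1 ((TensorProduct.equivFinsuppOfBasisLeft (N := A) b).map_ne_zero_iff.2 ht)
  obtain ⟨π, hπ⟩ := exists_algHom_apply_ne_zero (K := k) k (mt IsNilpotent.eq_zero hi)
  have coord : ∀ s : M ⊗[k] A,
      TensorProduct.equivFinsuppOfBasisLeft (N := k) b (π.toLinearMap.lTensor M s) i =
        π (TensorProduct.equivFinsuppOfBasisLeft b s i) := fun s ↦ by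
    induction s with
    | zero => simp
    | add x y hx hy => simp [hx, hy]
    | tmul x y => simp
  refine ⟨π, fun h ↦ hπ ?_⟩
  rw [← coord, h, map_zero, Finsupp.zero_apply]

lemma exists_ne_zero_forall_mem_range_comap {T C : Type*} [CommRing T] [IsDomain T] [CommRing C]
    [Algebra T C] [Algebra.FinitePresentation T C] [FaithfulSMul T C] :
    ∃ t : T, t ≠ 0 ∧ ∀ p : PrimeSpectrum T, t ∉ p.asIdeal →
      p ∈ Set.range (PrimeSpectrum.comap (algebraMap T C)) := by
  -- By Chevalley's theorem the image is a finite union of sets `D(f) ∩ V(g)`, and one of them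
  -- contains the generic point, so that `g = 0` there.
  obtain ⟨S, hS⟩ := PrimeSpectrum.exists_constructibleSetData_iff.2 <|
    PrimeSpectrum.isConstructible_range_comap <|
      RingHom.finitePresentation_algebraMap.2 ‹Algebra.FinitePresentation T C›
  have hbot : (⊥ : PrimeSpectrum T) ∈ S.toSet := by
    obtain ⟨q, hq, hqT⟩ := Ideal.exists_comap_eq_of_mem_minimalPrimes_of_injective
      (FaithfulSMul.algebraMap_injective T C) ⊥ (by simp [IsDomain.minimalPrimes_eq_singleton_bot])
    exact hS ▸ ⟨⟨q, hq⟩, PrimeSpectrum.ext hqT⟩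
  simp only [PrimeSpectrum.ConstructibleSetData.toSet, Set.mem_iUnion] at hbot
  obtain ⟨D, hD, hgD, hfD⟩ := hbot
  have hg : ∀ x ∈ Set.range D.g, x = 0 := fun x hx ↦ by simpa using hgD hx
  refine ⟨D.f, fun h ↦ hfD (by simp [h]), fun p hp ↦ ?_⟩
  rw [← hS, PrimeSpectrum.ConstructibleSetData.toSet, Set.mem_iUnion₂]
  exact ⟨D, hD, fun x hx ↦ hg x hx ▸ p.asIdeal.zero_mem, fun h ↦ hp (h rfl)⟩

lemma nonempty_algHom_of_mem_range_comap {T C Ω : Type*} [CommRing T] [CommRing C]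
    [Algebra T C] [Algebra.FiniteType T C] [Field Ω] [IsAlgClosed Ω] [Algebra T Ω]
    {p : PrimeSpectrum T} (hp : p ∈ Set.range (PrimeSpectrum.comap (algebraMap T C)))
    (hpΩ : p.asIdeal = RingHom.ker (algebraMap T Ω)) : Nonempty (C →ₐ[T] Ω) := by
  have : Nontrivial (p.asIdeal.ResidueField ⊗[T] C) := p.nontrivial_iff_mem_rangeComap.2 hp
  let _ : Algebra p.asIdeal.ResidueField Ω :=
    (Ideal.ResidueField.lift p.asIdeal (algebraMap T Ω) hpΩ.le
      fun x hx ↦ .mk0 _ fun h ↦ hx (hpΩ ▸ h)).toAlgebra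
  have : IsScalarTower T p.asIdeal.ResidueField Ω :=
    .of_algebraMap_eq fun x ↦ (Ideal.ResidueField.lift_algebraMap ..).symm
  obtain ⟨ψ⟩ :=
    nonempty_algHom_of_finiteType p.asIdeal.ResidueField (p.asIdeal.ResidueField ⊗[T] C) Ω
  exact ⟨(ψ.restrictScalars T).comp Algebra.TensorProduct.includeRight⟩

lemma exists_comp_algebraMap_eq_productMap {k A₁ A₂ C Ω : Type*} [Field k] [IsAlgClosed k]
    [CommRing A₁] [Algebra k A₁] [CommRing A₂] [Algebra k A₂] [Algebra.FiniteType k A₂]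
    [IsReduced A₂] [IsDomain (A₁ ⊗[k] A₂)] [CommRing C] [Algebra (A₁ ⊗[k] A₂) C]
    [Algebra.FinitePresentation (A₁ ⊗[k] A₂) C] [FaithfulSMul (A₁ ⊗[k] A₂) C]
    [Field Ω] [IsAlgClosed Ω] [Algebra k Ω] {j : A₁ →ₐ[k] Ω} (hj : Function.Injective j) :
    ∃ (π : A₂ →ₐ[k] k) (φ : C →+* Ω), φ.comp (algebraMap (A₁ ⊗[k] A₂) C) =
      Algebra.TensorProduct.productMap j ((Algebra.ofId k Ω).comp π) := by
  -- If `D(t)` is contained in the image of `Spec C` and `t` does not vanish on the fibre at `π`,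
  -- then the generic point of this fibre lifts to `Spec C`.
  obtain ⟨t, ht, hrange⟩ := exists_ne_zero_forall_mem_range_comap (T := A₁ ⊗[k] A₂) (C := C)
  obtain ⟨π, hπ⟩ := exists_algHom_lTensor_apply_ne_zero ht
  let h := Algebra.TensorProduct.productMap j ((Algebra.ofId k Ω).comp π)
  have h_eq : ∀ s, h s = j (TensorProduct.rid k A₁ (π.toLinearMap.lTensor A₁ s)) := fun s ↦ by
    induction s with
    | zero => simp
    | add x y hx hy => simp [hx, hy]
    | tmul x y => simp [h, Algebra.ofId_apply, Algebra.smul_def, mul_comm]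
  have ht' : h t ≠ 0 := by
    rwa [h_eq, map_ne_zero_iff j hj, LinearEquiv.map_ne_zero_iff]
  let _ : Algebra (A₁ ⊗[k] A₂) Ω := h.toAlgebra
  obtain ⟨φ⟩ := nonempty_algHom_of_mem_range_comap (C := C) (Ω := Ω)
    (hrange ⟨RingHom.ker h, RingHom.ker_isPrime _⟩ ht') rfl
  exact ⟨π, φ, φ.comp_algebraMap⟩

end Specialization

/-! ### Base change to finitely generated subalgebras -/

attribute [local simp] pullback.lift_fst pullback.lift_snd pullback.lift_snd_assoc

/-- The morphism `Spec R ⟶ Spec B` of a `B`-algebra `R`, along which schemes are base-changed. -/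
noncomputable abbrev specAlgebraMap (B R : Type u) [CommRing B] [CommRing R] [Algebra B R] :
    Spec (.of R) ⟶ Spec (.of B) :=
  Spec.map (CommRingCat.ofHom (algebraMap B R))

lemma specAlgebraMap_comp (B C R : Type u) [CommRing B] [CommRing C] [CommRing R] [Algebra B C]
    [Algebra C R] [Algebra B R] [IsScalarTower B C R] :
    specAlgebraMap C R ≫ specAlgebraMap B C = specAlgebraMap B R := by
  rw [← Spec.map_comp, ← CommRingCat.ofHom_comp, ← IsScalarTower.algebraMap_eq]

/-- The finitely generated `B`-subalgebras of `R`, ordered by inclusion. They form a directed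
system of rings with colimit `R`. -/
abbrev FGSubalgebra (B R : Type u) [CommRing B] [CommRing R] [Algebra B R] : Type u :=
  {C : Subalgebra B R // C.FG}

namespace FGSubalgebra

section System

variable (B R : Type u) [CommRing B] [CommRing R] [Algebra B R]

instance : Nonempty (FGSubalgebra B R) := ⟨⟨⊥, Subalgebra.fg_bot⟩⟩

instance : IsDirectedOrder (FGSubalgebra B R) :=
  ⟨fun C D ↦ ⟨⟨C.1 ⊔ D.1, C.2.sup D.2⟩, le_sup_left (a := C.1), le_sup_right (a := C.1)⟩⟩

/-- The directed system of the finitely generated `B`-subalgebras of `R`. -/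
def ringDiagram : FGSubalgebra B R ⥤ CommRingCat.{u} where
  obj C := .of C.1
  map h := CommRingCat.ofHom (Subalgebra.inclusion (leOfHom h)).toRingHom

/-- The inclusions of the finitely generated `B`-subalgebras into `R`. -/
def ringCocone : Cocone (ringDiagram B R) where
  pt := .of R
  ι := { app C := CommRingCat.ofHom (algebraMap C.1 R) }

/-- `R` is the filtered colimit of its finitely generated `B`-subalgebras. -/
noncomputable def ringCoconeIsColimit : IsColimit (ringCocone B R) := by
  have : ReflectsFilteredColimits (forget CommRingCat.{u}) :=
    ⟨fun _ ↦ reflectsColimitsOfShape_of_reflectsIsomorphisms⟩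
  refine (ReflectsColimit.reflects (F := forget _)
    (Types.FilteredColimit.isColimitOf' _ _ ?_ ?_)).some
  · intro (x : R)
    exact ⟨⟨Algebra.adjoin B {x}, ⟨{x}, by rw [Finset.coe_singleton]⟩⟩,
      ⟨x, Algebra.self_mem_adjoin_singleton B x⟩, rfl⟩
  · intro C x y hxy
    exact ⟨C, 𝟙 _, congrArg _ (Subtype.ext hxy)⟩

/-- The inverse system of the spectra of the finitely generated `B`-subalgebras of `R`. -/
noncomputable abbrev specDiagram : (FGSubalgebra B R)ᵒᵖ ⥤ Scheme.{u} :=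
  (ringDiagram B R).op ⋙ Scheme.Spec

/-- `Spec R`, as a cone over the spectra of the finitely generated `B`-subalgebras of `R`. -/
noncomputable abbrev specCone : Cone (specDiagram B R) := Scheme.Spec.mapCone (ringCocone B R).op

/-- `Spec R` is the limit of the spectra of the finitely generated `B`-subalgebras of `R`. -/
noncomputable def specConeIsLimit : IsLimit (specCone B R) :=
  isLimitOfPreserves Scheme.Spec (ringCoconeIsColimit B R).op

end System

section BaseChange

variable {B R : Type u} [CommRing B] [CommRing R] [Algebra B R] {X Y W : Scheme.{u}}

/-- The morphism of spectra of an inclusion of finitely generated subalgebras. -/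
noncomputable abbrev specMap {C D : FGSubalgebra B R} (h : C ≤ D) :
    Spec (.of D.1) ⟶ Spec (.of C.1) :=
  Spec.map (CommRingCat.ofHom (Subalgebra.inclusion h).toRingHom)

lemma specMap_comp_specAlgebraMap {C D : FGSubalgebra B R} (h : C ≤ D) :
    specMap h ≫ specAlgebraMap B C.1 = specAlgebraMap B D.1 :=
  (Spec.map_comp _ _).symm

@[simp]
lemma specAlgebraMap_comp_specMap {C D : FGSubalgebra B R} (h : C ≤ D) :
    specAlgebraMap D.1 R ≫ specMap h = specAlgebraMap C.1 R :=
  (Spec.map_comp _ _).symm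

@[simp]
lemma specMap_self (C : FGSubalgebra B R) : specMap (le_refl C) = 𝟙 _ :=
  Spec.map_id _

lemma specMap_comp_specMap {C D E : FGSubalgebra B R} (h : C ≤ D) (h' : D ≤ E) :
    specMap h' ≫ specMap h = specMap (h.trans h') :=
  (Spec.map_comp _ _).symm

/-- The base change of a `B`-scheme to a finitely generated subalgebra. -/
noncomputable abbrev baseChange (f : X ⟶ Spec (.of B)) (C : FGSubalgebra B R) : Scheme.{u} :=
  pullback f (specAlgebraMap B C.1)

/-- The transition morphism between the base changes of a `B`-scheme to two finitely generated
subalgebras. -/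
noncomputable abbrev transition (f : X ⟶ Spec (.of B)) {C D : FGSubalgebra B R} (h : C ≤ D) :
    baseChange f D ⟶ baseChange f C :=
  pullback.lift (pullback.fst _ _) (pullback.snd _ _ ≫ specMap h)
    (by rw [Category.assoc, specMap_comp_specAlgebraMap, pullback.condition])

lemma transition_comp_transition (f : X ⟶ Spec (.of B)) {C D E : FGSubalgebra B R} (h : C ≤ D)
    (h' : D ≤ E) : transition f h' ≫ transition f h = transition f (h.trans h') := by
  apply pullback.hom_ext <;> simp [specMap_comp_specMap]

/-- The inverse system of the base changes of a `B`-scheme to the finitely generated subalgebras. -/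
noncomputable def baseChangeDiagram (R : Type u) [CommRing R] [Algebra B R]
    (f : X ⟶ Spec (.of B)) : (FGSubalgebra B R)ᵒᵖ ⥤ Scheme.{u} where
  obj C := baseChange f C.unop
  map h := transition f (leOfHom h.unop)
  map_id C := by apply pullback.hom_ext <;> simp
  map_comp h h' := (transition_comp_transition f (leOfHom h'.unop) (leOfHom h.unop)).symm

/-- The structure morphisms of the base changes. -/
noncomputable def baseChangeToSpec (R : Type u) [CommRing R] [Algebra B R]
    (f : X ⟶ Spec (.of B)) : baseChangeDiagram R f ⟶ specDiagram B R where
  app _ := pullback.snd _ _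
  naturality _ _ _ := pullback.lift_snd _ _ _

/-- The projections of the base changes. -/
noncomputable def baseChangeToSelf (R : Type u) [CommRing R] [Algebra B R]
    (f : X ⟶ Spec (.of B)) : baseChangeDiagram R f ⟶ (Functor.const _).obj X where
  app _ := pullback.fst _ _
  naturality _ _ _ := (pullback.lift_fst _ _ _).trans (Category.comp_id _).symm

instance isNoetherianRing [IsNoetherianRing B] (C : FGSubalgebra B R) : IsNoetherianRing C.1 :=
  have : Algebra.FiniteType B C.1 := C.1.fg_iff_finiteType.1 C.2
  Algebra.FiniteType.isNoetherianRing B C.1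

instance isAffineHom_pullback_fst (f : X ⟶ Spec (.of B)) (C : FGSubalgebra B R) :
    IsAffineHom (pullback.fst f (specAlgebraMap B C.1)) :=
  MorphismProperty.of_isPullback (IsPullback.of_hasPullback f (specAlgebraMap B C.1)).flip
    inferInstance

instance isAffineHom_baseChangeDiagram_map (f : X ⟶ Spec (.of B)) {C D : (FGSubalgebra B R)ᵒᵖ}
    (h : C ⟶ D) : IsAffineHom ((baseChangeDiagram R f).map h) := by
  let t : baseChange f C.unop ⟶ baseChange f D.unop := transition f (leOfHom h.unop)
  have : IsAffineHom (t ≫ pullback.fst f (specAlgebraMap B D.unop.1)) := by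
    rw [pullback.lift_fst]; infer_instance
  exact .of_comp t (pullback.fst f (specAlgebraMap B D.unop.1))

instance compactSpace_baseChange [CompactSpace X] (f : X ⟶ Spec (.of B)) (C : FGSubalgebra B R) :
    CompactSpace (baseChange f C) :=
  QuasiCompact.compactSpace_of_compactSpace (pullback.fst f (specAlgebraMap B C.1))

instance compactSpace_baseChangeDiagram_obj [CompactSpace X] (f : X ⟶ Spec (.of B))
    (C : (FGSubalgebra B R)ᵒᵖ) : CompactSpace ((baseChangeDiagram R f).obj C) :=
  compactSpace_baseChange f C.unop

instance quasiSeparatedSpace_baseChange [QuasiSeparatedSpace X] (f : X ⟶ Spec (.of B))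
    (C : FGSubalgebra B R) : QuasiSeparatedSpace (baseChange f C) :=
  quasiSeparatedSpace_of_quasiSeparated (pullback.fst f (specAlgebraMap B C.1))

instance quasiSeparatedSpace_baseChangeDiagram_obj [QuasiSeparatedSpace X] (f : X ⟶ Spec (.of B))
    (C : (FGSubalgebra B R)ᵒᵖ) : QuasiSeparatedSpace ((baseChangeDiagram R f).obj C) :=
  quasiSeparatedSpace_baseChange f C.unop

section Cone

variable {f : X ⟶ Spec (.of B)} {p : W ⟶ X} {w : W ⟶ Spec (.of R)}

/-- If `W` is the base change of `X` to `R`, this is the projection from `W` to the base change of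
`X` to a finitely generated subalgebra. -/
noncomputable abbrev toBaseChange (hX : IsPullback p w f (specAlgebraMap B R))
    (C : FGSubalgebra B R) : W ⟶ baseChange f C :=
  pullback.lift p (w ≫ specAlgebraMap C.1 R)
    (by rw [Category.assoc, specAlgebraMap_comp, hX.w])

variable (hX : IsPullback p w f (specAlgebraMap B R))

lemma isPullback_toBaseChange (C : FGSubalgebra B R) :
    IsPullback (toBaseChange hX C) w (pullback.snd _ _) (specAlgebraMap C.1 R) := by
  refine .of_right ?_ (pullback.lift_snd _ _ _) (IsPullback.of_hasPullback f (specAlgebraMap B C.1))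
  rwa [pullback.lift_fst, specAlgebraMap_comp]

lemma toBaseChange_comp_transition {C D : FGSubalgebra B R} (h : C ≤ D) :
    toBaseChange hX D ≫ transition f h = toBaseChange hX C := by
  apply pullback.hom_ext <;> simp

/-- The base change to `R`, as a cone over the base changes to the finitely generated
subalgebras. -/
noncomputable def baseChangeCone : Cone (baseChangeDiagram R f) where
  pt := W
  π :=
    { app C := toBaseChange hX C.unop
      naturality _ _ h :=
        (Category.id_comp _).trans (toBaseChange_comp_transition hX (leOfHom h.unop)).symm }

attribute [local instance] IsCofiltered.isConnected in
/-- The base change to `R` is the limit of the base changes to the finitely generated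
subalgebras. -/
noncomputable def baseChangeConeIsLimit : IsLimit (baseChangeCone hX) :=
  isLimitOfIsPullbackOfIsConnected (baseChangeToSpec R f) (baseChangeCone hX) (specCone B R)
    { hom := w, w := fun _ ↦ (pullback.lift_snd _ _ _).symm }
    (fun C ↦ isPullback_toBaseChange hX C.unop) (specConeIsLimit B R)

lemma exists_toBaseChange_comp_eq [CompactSpace X] [QuasiSeparatedSpace X] {g : Y ⟶ Spec (.of B)}
    [LocallyOfFinitePresentation g] {q : W ⟶ Y} (hq : q ≫ g = p ≫ f) :
    ∃ (C : FGSubalgebra B R) (a : baseChange f C ⟶ Y),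
      toBaseChange hX C ≫ a = q ∧ a ≫ g = pullback.fst _ _ ≫ f := by
  obtain ⟨C, a, ha, hag⟩ := Scheme.exists_π_app_comp_eq_of_locallyOfFinitePresentation
    (baseChangeDiagram R f) (baseChangeToSelf R f ≫ (Functor.const _).map f) g (baseChangeCone hX)
    (baseChangeConeIsLimit hX) q <| by
      ext C
      change toBaseChange hX C.unop ≫ pullback.fst _ _ ≫ f = q ≫ g
      rw [pullback.lift_fst_assoc, hq]
  exact ⟨C.unop, a, ha, hag⟩

lemma exists_transition_comp_eq [CompactSpace X] {g : Y ⟶ Spec (.of B)} [LocallyOfFiniteType g]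
    {C : FGSubalgebra B R} {a b : baseChange f C ⟶ Y} (ha : a ≫ g = pullback.fst _ _ ≫ f)
    (hb : b ≫ g = pullback.fst _ _ ≫ f) (hab : toBaseChange hX C ≫ a = toBaseChange hX C ≫ b) :
    ∃ (D : FGSubalgebra B R) (h : C ≤ D), transition f h ≫ a = transition f h ≫ b := by
  obtain ⟨D, h, hD⟩ := Scheme.exists_hom_comp_eq_comp_of_locallyOfFiniteType
    (baseChangeDiagram R f) (baseChangeToSelf R f ≫ (Functor.const _).map f) g (baseChangeCone hX)
    (baseChangeConeIsLimit hX) (i := .op C) a b ha.symm hb.symm hab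
  exact ⟨D.unop, leOfHom h.unop, hD⟩

lemma exists_toBaseChange_preimage_eq {U : W.Opens} (hU : IsCompact (U : Set W)) :
    ∃ C₀ : FGSubalgebra B R, ∀ C, C₀ ≤ C →
      ∃ U' : (baseChange f C).Opens, toBaseChange hX C ⁻¹ᵁ U' = U := by
  obtain ⟨C₀, (U₀ : (baseChange f C₀.unop).Opens), -, (h₀ : toBaseChange hX C₀.unop ⁻¹ᵁ U₀ = U)⟩ :=
    exists_preimage_eq (baseChangeDiagram R f) (baseChangeCone hX) (baseChangeConeIsLimit hX) U hU
  refine ⟨C₀.unop, fun C h ↦ ⟨transition f h ⁻¹ᵁ U₀, ?_⟩⟩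
  rw [← Scheme.Hom.comp_preimage, toBaseChange_comp_transition, h₀]

end Cone

section CommonModel

/-- The base change to a larger finitely generated subalgebra of a morphism between base changes. -/
noncomputable abbrev baseChangeHom {f : X ⟶ Spec (.of B)} {g : Y ⟶ Spec (.of B)}
    {C D : FGSubalgebra B R} (h : C ≤ D) (a : baseChange f C ⟶ baseChange g C)
    (ha : a ≫ pullback.snd _ _ = pullback.snd _ _) : baseChange f D ⟶ baseChange g D :=
  pullback.lift (transition f h ≫ a ≫ pullback.fst _ _) (pullback.snd _ _) <| by
    rw [Category.assoc, Category.assoc, pullback.condition, reassoc_of% ha, pullback.lift_snd_assoc,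
      Category.assoc, specMap_comp_specAlgebraMap]

variable {f : X ⟶ Spec (.of B)} {g : Y ⟶ Spec (.of B)} {p : W ⟶ X} {q : W ⟶ Y}
  {w : W ⟶ Spec (.of R)}

lemma baseChangeHom_comp_transition {C D : FGSubalgebra B R} (h : C ≤ D)
    {a : baseChange f C ⟶ baseChange g C} (ha : a ≫ pullback.snd _ _ = pullback.snd _ _) :
    baseChangeHom h a ha ≫ transition g h = transition f h ≫ a := by
  apply pullback.hom_ext <;> simp [ha]

lemma baseChangeHom_comp_baseChangeHom_eq_id {C D E : FGSubalgebra B R} (h : C ≤ D) (h' : D ≤ E)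
    {a : baseChange f C ⟶ baseChange g C} (ha : a ≫ pullback.snd _ _ = pullback.snd _ _)
    {b : baseChange g C ⟶ baseChange f C} (hb : b ≫ pullback.snd _ _ = pullback.snd _ _)
    (hab : transition f h ≫ a ≫ b = transition f h) :
    baseChangeHom (h.trans h') a ha ≫ baseChangeHom (h.trans h') b hb = 𝟙 _ := by
  apply pullback.hom_ext
  · rw [Category.assoc, pullback.lift_fst, reassoc_of% baseChangeHom_comp_transition,
      ← transition_comp_transition f h h', Category.assoc, reassoc_of% hab]
    simp
  · simp

variable (hX : IsPullback p w f (specAlgebraMap B R)) (hY : IsPullback q w g (specAlgebraMap B R))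

lemma toBaseChange_comp_baseChangeHom {C D : FGSubalgebra B R} (h : C ≤ D)
    {a : baseChange f C ⟶ baseChange g C} (ha : a ≫ pullback.snd _ _ = pullback.snd _ _)
    (hXY : toBaseChange hX C ≫ a = toBaseChange hY C) :
    toBaseChange hX D ≫ baseChangeHom h a ha = toBaseChange hY D := by
  apply pullback.hom_ext
  · rw [Category.assoc, pullback.lift_fst, reassoc_of% toBaseChange_comp_transition,
      reassoc_of% hXY, pullback.lift_fst, pullback.lift_fst]
  · simp

lemma exists_hom [CompactSpace X] [QuasiSeparatedSpace X] [LocallyOfFinitePresentation g] :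
    ∃ C₀ : FGSubalgebra B R, ∀ C, C₀ ≤ C → ∃ a : baseChange f C ⟶ baseChange g C,
      a ≫ pullback.snd _ _ = pullback.snd _ _ ∧ toBaseChange hX C ≫ a = toBaseChange hY C := by
  obtain ⟨C₀, a, ha, hag⟩ := exists_toBaseChange_comp_eq hX (hY.w.trans hX.w.symm)
  refine ⟨C₀, fun C h ↦ ⟨pullback.lift (transition f h ≫ a) (pullback.snd _ _) ?_,
    pullback.lift_snd _ _ _, pullback.hom_ext ?_ ?_⟩⟩
  · rw [Category.assoc, hag, pullback.lift_fst_assoc, pullback.condition]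
  · rw [Category.assoc, pullback.lift_fst, reassoc_of% toBaseChange_comp_transition, ha,
      pullback.lift_fst]
  · simp

lemma exists_transition_comp_comp_eq [CompactSpace X] [LocallyOfFiniteType f]
    {C : FGSubalgebra B R} {a : baseChange f C ⟶ baseChange g C}
    (ha : a ≫ pullback.snd _ _ = pullback.snd _ _)
    {b : baseChange g C ⟶ baseChange f C} (hb : b ≫ pullback.snd _ _ = pullback.snd _ _)
    (hXY : toBaseChange hX C ≫ a = toBaseChange hY C)
    (hYX : toBaseChange hY C ≫ b = toBaseChange hX C) :
    ∃ (D : FGSubalgebra B R) (h : C ≤ D), transition f h ≫ a ≫ b = transition f h := by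
  obtain ⟨D, h, hD⟩ := exists_transition_comp_eq hX (a := a ≫ b ≫ pullback.fst _ _)
    (b := pullback.fst _ _)
    (by simp [pullback.condition, reassoc_of% hb, reassoc_of% ha]) rfl
    (by rw [reassoc_of% hXY, reassoc_of% hYX])
  refine ⟨D, h, pullback.hom_ext ?_ ?_⟩
  · simpa only [Category.assoc] using hD
  · simp [hb, ha]

lemma exists_iso [CompactSpace X] [QuasiSeparatedSpace X] [LocallyOfFinitePresentation f]
    [CompactSpace Y] [QuasiSeparatedSpace Y] [LocallyOfFinitePresentation g] :
    ∃ (C : FGSubalgebra B R) (e : baseChange f C ≅ baseChange g C),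
      e.hom ≫ pullback.snd _ _ = pullback.snd _ _ ∧
        toBaseChange hX C ≫ e.hom = toBaseChange hY C := by
  obtain ⟨C₁, h₁⟩ := exists_hom hX hY
  obtain ⟨C₂, h₂⟩ := exists_hom hY hX
  obtain ⟨C, hC₁, hC₂⟩ := exists_ge_ge C₁ C₂
  obtain ⟨a, ha, hXY⟩ := h₁ C hC₁
  obtain ⟨b, hb, hYX⟩ := h₂ C hC₂
  obtain ⟨D₁, hD₁, hab⟩ := exists_transition_comp_comp_eq hX hY ha hb hXY hYX
  obtain ⟨D₂, hD₂, hba⟩ := exists_transition_comp_comp_eq hY hX hb ha hYX hXY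
  obtain ⟨D, h₁D, h₂D⟩ := exists_ge_ge D₁ D₂
  exact ⟨D, ⟨baseChangeHom _ a ha, baseChangeHom _ b hb,
      baseChangeHom_comp_baseChangeHom_eq_id hD₁ h₁D ha hb hab,
      baseChangeHom_comp_baseChangeHom_eq_id hD₂ h₂D hb ha hba⟩,
    pullback.lift_snd _ _ _, toBaseChange_comp_baseChangeHom hX hY _ ha hXY⟩

include hX hY in
lemma exists_common_model [CompactSpace X] [QuasiSeparatedSpace X] [LocallyOfFinitePresentation f]
    [CompactSpace Y] [QuasiSeparatedSpace Y] [LocallyOfFinitePresentation g] :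
    ∃ (C : FGSubalgebra B R) (Z : Scheme.{u}) (z : Z ⟶ Spec (.of C.1)) (s : W ⟶ Z) (a : Z ⟶ X)
      (b : Z ⟶ Y), IsPullback s w z (specAlgebraMap C.1 R) ∧
        IsPullback a z f (specAlgebraMap B C.1) ∧ IsPullback b z g (specAlgebraMap B C.1) ∧
        s ≫ a = p ∧ s ≫ b = q := by
  obtain ⟨C, e, he, hs⟩ := exists_iso hX hY
  refine ⟨C, baseChange f C, pullback.snd _ _, toBaseChange hX C, pullback.fst _ _,
    e.hom ≫ pullback.fst _ _, isPullback_toBaseChange hX C, .of_hasPullback _ _, ?_,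
    pullback.lift_fst _ _ _, by rw [reassoc_of% hs, pullback.lift_fst]⟩
  exact (IsPullback.of_hasPullback g _).of_iso e.symm (.refl _) (.refl _) (.refl _) (by simp)
    (by simp [← he]) (by simp) (by simp)

end CommonModel

end BaseChange

end FGSubalgebra

/-! ### Gluing models -/

section Gluing

variable {S T W W₁ W₂ W₁₂ : Scheme.{u}} {j₁ : W₁ ⟶ W} {j₂ : W₂ ⟶ W} [IsOpenImmersion j₁]
  [IsOpenImmersion j₂] {t₁ : W₁₂ ⟶ W₁} {t₂ : W₁₂ ⟶ W₂}

/-- The open cover of a scheme by two open immersions, indexed by `true` and `false`. -/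
def openCoverOfPair (j₁ : W₁ ⟶ W) (j₂ : W₂ ⟶ W) [IsOpenImmersion j₁] [IsOpenImmersion j₂]
    (hj : j₁.opensRange ⊔ j₂.opensRange = ⊤) : W.OpenCover where
  I₀ := Bool
  X b := match b with
    | true => W₁
    | false => W₂
  f b := match b with
    | true => j₁
    | false => j₂
  mem₀ := by
    rw [Scheme.presieve₀_mem_precoverage_iff]
    refine ⟨fun x ↦ ?_, Bool.rec ‹_› ‹_›⟩
    rcases (hj ▸ trivial : x ∈ j₁.opensRange ⊔ j₂.opensRange) with h | h
    exacts [⟨true, h⟩, ⟨false, h⟩]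

lemma exists_hom_of_opensRange_sup_eq_top (hj : j₁.opensRange ⊔ j₂.opensRange = ⊤)
    (ht : IsPullback t₁ t₂ j₁ j₂) {a₁ : W₁ ⟶ S} {a₂ : W₂ ⟶ S} (ha : t₁ ≫ a₁ = t₂ ≫ a₂) :
    ∃ a : W ⟶ S, j₁ ≫ a = a₁ ∧ j₂ ≫ a = a₂ := by
  let 𝒰 := openCoverOfPair j₁ j₂ hj
  let φ (b : Bool) : 𝒰.X b ⟶ S := match b with
    | true => a₁
    | false => a₂
  have hφ (b c : Bool) : pullback.fst (𝒰.f b) (𝒰.f c) ≫ φ b = pullback.snd _ _ ≫ φ c := by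
    match b, c with
    | true, true => exact congr($(fst_eq_snd_of_mono_eq j₁) ≫ a₁)
    | true, false =>
      change pullback.fst j₁ j₂ ≫ a₁ = pullback.snd j₁ j₂ ≫ a₂
      rw [← ht.isoPullback_inv_fst, ← ht.isoPullback_inv_snd, Category.assoc, ha, Category.assoc]
    | false, true =>
      change pullback.fst j₂ j₁ ≫ a₂ = pullback.snd j₂ j₁ ≫ a₁
      rw [← ht.flip.isoPullback_inv_fst, ← ht.flip.isoPullback_inv_snd, Category.assoc, ← ha,
        Category.assoc]
    | false, false => exact congr($(fst_eq_snd_of_mono_eq j₂) ≫ a₂)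
  exact ⟨𝒰.glueMorphisms φ hφ, 𝒰.ι_glueMorphisms φ hφ true, 𝒰.ι_glueMorphisms φ hφ false⟩

lemma locallyOfFiniteType_of_opensRange_sup_eq_top (hj : j₁.opensRange ⊔ j₂.opensRange = ⊤)
    (w : W ⟶ S) [LocallyOfFiniteType (j₁ ≫ w)] [LocallyOfFiniteType (j₂ ≫ w)] :
    LocallyOfFiniteType w := by
  have := HasRingHomProperty.instIsZariskiLocalAtSource
    (P := @LocallyOfFiniteType) (Q := RingHom.FiniteType)
  exact (IsZariskiLocalAtSource.iff_of_openCover (openCoverOfPair j₁ j₂ hj)).2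
    (Bool.rec ‹_› ‹_›)

lemma compactSpace_of_opensRange_sup_eq_top (hj : j₁.opensRange ⊔ j₂.opensRange = ⊤)
    [CompactSpace W₁] [CompactSpace W₂] : CompactSpace W := by
  have hW : Set.range j₁ ∪ Set.range j₂ = .univ := congr(($hj : Set W))
  exact ⟨hW ▸ (isCompact_range j₁.continuous).union (isCompact_range j₂.continuous)⟩

variable {X₁ X₂ X₁₂ Z : Scheme.{u}} {i₁ : X₁₂ ⟶ X₁} {i₂ : X₁₂ ⟶ X₂}

lemma exists_isPullback_isOpenImmersion (i₁ : X₁₂ ⟶ X₁) (i₂ : X₁₂ ⟶ X₂) [IsOpenImmersion i₁]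
    [IsOpenImmersion i₂] :
    ∃ (Z : Scheme.{u}) (z₁ : X₁ ⟶ Z) (z₂ : X₂ ⟶ Z) (_ : IsOpenImmersion z₁)
      (_ : IsOpenImmersion z₂), z₁.opensRange ⊔ z₂.opensRange = ⊤ ∧ IsPullback i₁ i₂ z₁ z₂ := by
  have hF {i j : WalkingSpan} (f : i ⟶ j) : IsOpenImmersion ((span i₁ i₂).map f) := by
    match f with
    | .id _ => rw [WidePushoutShape.hom_id, CategoryTheory.Functor.map_id]; infer_instance
    | .init .left => assumption
    | .init .right => assumption
  let z₁ : X₁ ⟶ pushout i₁ i₂ := pushout.inl i₁ i₂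
  let z₂ : X₂ ⟶ pushout i₁ i₂ := pushout.inr i₁ i₂
  have hz₁ : IsOpenImmersion z₁ := Scheme.IsLocallyDirected.instIsOpenImmersionι (span i₁ i₂) _
  have hz₂ : IsOpenImmersion z₂ := Scheme.IsLocallyDirected.instIsOpenImmersionι (span i₁ i₂) _
  have hw : i₁ ≫ z₁ = i₂ ≫ z₂ := pushout.condition
  refine ⟨pushout i₁ i₂, z₁, z₂, hz₁, hz₂, top_le_iff.1 fun x _ ↦ ?_,
    IsOpenImmersion.isPullback _ _ _ _ hw.symm (le_antisymm ?_ ?_)⟩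
  · obtain ⟨_ | _ | _, y, rfl⟩ :=
      Scheme.IsLocallyDirected.ι_jointly_surjective (span i₁ i₂) x
    · exact .inl ⟨i₁ y, congr($(colimit.w (span i₁ i₂) (.init .left)) y)⟩
    · exact .inl ⟨y, rfl⟩
    · exact .inr ⟨y, rfl⟩
  · rintro x₂ ⟨x₁, hx⟩
    obtain ⟨k, f₁, f₂, x, -, hx₂⟩ := (Scheme.IsLocallyDirected.ι_eq_ι_iff (span i₁ i₂)).1 hx
    match k, f₁, f₂ with
    | _, .init _, .init _ => exact ⟨x, hx₂⟩
  · rintro _ ⟨x, rfl⟩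
    exact ⟨i₁ x, congr($hw x)⟩

lemma isPullback_of_comp_eq_comp (hj : j₁.opensRange ⊔ j₂.opensRange = ⊤)
    (ht : t₁ ≫ j₁ = t₂ ≫ j₂) {z₁ : X₁ ⟶ Z} {z₂ : X₂ ⟶ Z} [IsOpenImmersion z₁]
    (hz : IsPullback i₁ i₂ z₁ z₂) {p₁ : W₁ ⟶ X₁} {p₂ : W₂ ⟶ X₂} {p₁₂ : W₁₂ ⟶ X₁₂} {p : W ⟶ Z}
    (hp₁ : j₁ ≫ p = p₁ ≫ z₁) (hp₂ : j₂ ≫ p = p₂ ≫ z₂) (hp₁₂ : IsPullback p₁₂ t₂ i₂ p₂) :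
    IsPullback p₁ j₁ z₁ p := by
  refine IsOpenImmersion.isPullback _ _ _ _ hp₁ (le_antisymm ?_ ?_)
  · rintro x ⟨y, hy⟩
    rcases (hj ▸ trivial : x ∈ j₁.opensRange ⊔ j₂.opensRange) with hx | ⟨x₂, rfl⟩
    · exact hx
    · obtain ⟨y', -, hy'⟩ := Scheme.exists_preimage_of_isPullback hz y (p₂ x₂)
        (hy.trans congr($hp₂ x₂))
      obtain ⟨v, -, rfl⟩ := Scheme.exists_preimage_of_isPullback hp₁₂ y' x₂ hy'
      exact ⟨t₁ v, congr($ht v)⟩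
  · rintro _ ⟨x, rfl⟩
    exact ⟨p₁ x, congr($hp₁ x).symm⟩

omit [IsOpenImmersion j₁] [IsOpenImmersion j₂] in
lemma isPullback_of_opensRange_sup_eq_top {z₁ : X₁ ⟶ Z} {z₂ : X₂ ⟶ Z} [IsOpenImmersion z₁]
    [IsOpenImmersion z₂] (hz : z₁.opensRange ⊔ z₂.opensRange = ⊤) {p₁ : W₁ ⟶ X₁} {p₂ : W₂ ⟶ X₂}
    {p : W ⟶ Z} {w : W ⟶ T} {g : Z ⟶ S} {b : T ⟶ S} (hp₁ : IsPullback p₁ j₁ z₁ p)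
    (hp₂ : IsPullback p₂ j₂ z₂ p) (h₁ : IsPullback p₁ (j₁ ≫ w) (z₁ ≫ g) b)
    (h₂ : IsPullback p₂ (j₂ ≫ w) (z₂ ≫ g) b) : IsPullback p w g b := by
  have key {A A' : Scheme.{u}} {a : A' ⟶ A} {j : A' ⟶ W} {z : A ⟶ Z} (ha : IsPullback a j z p)
      (h : IsPullback a (j ≫ w) (z ≫ g) b) :
      IsPullback (pullback.snd p z) (pullback.fst p z ≫ w) (z ≫ g) b :=
    h.of_iso ha.flip.isoPullback (.refl _) (.refl _) (.refl _) (by simp) (by simp) (by simp)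
      (by simp)
  exact Scheme.isPullback_of_openCover _ _ _ _ (openCoverOfPair z₁ z₂ hz)
    (Bool.rec (key hp₂ h₂) (key hp₁ h₁))

lemma exists_isPullback_of_opensRange_sup_eq_top (hj : j₁.opensRange ⊔ j₂.opensRange = ⊤)
    (ht : IsPullback t₁ t₂ j₁ j₂) [IsOpenImmersion i₁] [IsOpenImmersion i₂] {w : W ⟶ T}
    {b : T ⟶ S} {f₁ : X₁ ⟶ S} {f₂ : X₂ ⟶ S} (hi : i₁ ≫ f₁ = i₂ ≫ f₂) {p₁ : W₁ ⟶ X₁}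
    {p₂ : W₂ ⟶ X₂} {p₁₂ : W₁₂ ⟶ X₁₂} (h₁ : IsPullback p₁ (j₁ ≫ w) f₁ b)
    (h₂ : IsPullback p₂ (j₂ ≫ w) f₂ b) (hp₁ : IsPullback p₁₂ t₁ i₁ p₁)
    (hp₂ : IsPullback p₁₂ t₂ i₂ p₂) [LocallyOfFiniteType f₁] [LocallyOfFiniteType f₂]
    [CompactSpace X₁] [CompactSpace X₂] :
    ∃ (Z : Scheme.{u}) (g : Z ⟶ S) (p : W ⟶ Z), LocallyOfFiniteType g ∧ CompactSpace Z ∧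
      IsPullback p w g b := by
  obtain ⟨Z, z₁, z₂, _, _, hz, hi'⟩ := exists_isPullback_isOpenImmersion i₁ i₂
  obtain ⟨g, rfl, rfl⟩ := exists_hom_of_opensRange_sup_eq_top hz hi' hi
  obtain ⟨p, hpz₁, hpz₂⟩ := exists_hom_of_opensRange_sup_eq_top hj ht
    (a₁ := p₁ ≫ z₁) (a₂ := p₂ ≫ z₂) <| by
      rw [← reassoc_of% hp₁.w, hi'.w, reassoc_of% hp₂.w]
  refine ⟨Z, g, p, locallyOfFiniteType_of_opensRange_sup_eq_top hz g,
    compactSpace_of_opensRange_sup_eq_top hz,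
    isPullback_of_opensRange_sup_eq_top hz ?_ ?_ h₁ h₂⟩
  · exact isPullback_of_comp_eq_comp hj ht.w hi' hpz₁ hpz₂ hp₂
  · exact isPullback_of_comp_eq_comp (sup_comm _ _ |>.trans hj) ht.w.symm hi'.flip hpz₂ hpz₁ hp₁

end Gluing

/-! ### Models over finitely generated subalgebras -/

section FGModel

variable {B R : Type u} [CommRing B] [CommRing R] [Algebra B R] {W W₁ W₂ W₁₂ : Scheme.{u}}
  {w : W ⟶ Spec (.of R)}

/-- A scheme `W` over a `B`-algebra `R` has a finitely generated model if it is the base change of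
a quasi-compact scheme locally of finite type over a finitely generated `B`-subalgebra of `R`. -/
def HasFGModel (B : Type u) {R : Type u} [CommRing B] [CommRing R] [Algebra B R] {W : Scheme.{u}}
    (w : W ⟶ Spec (.of R)) : Prop :=
  ∃ (C : FGSubalgebra B R) (X : Scheme.{u}) (g : X ⟶ Spec (.of C.1)) (p : W ⟶ X),
    LocallyOfFiniteType g ∧ CompactSpace X ∧ IsPullback p w g (specAlgebraMap C.1 R)

lemma HasFGModel.trans {C : FGSubalgebra B R} (hw : HasFGModel C.1 w) : HasFGModel B w := by
  obtain ⟨D, X, g, p, hg, hX, hp⟩ := hw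
  have : Algebra.FiniteType B C.1 := C.1.fg_iff_finiteType.1 C.2
  have : Algebra.FiniteType C.1 D.1 := D.1.fg_iff_finiteType.1 D.2
  have hD : Algebra.FiniteType B D.1 := .trans (S := C.1) ‹_› ‹_›
  exact ⟨⟨D.1.restrictScalars B, (D.1.restrictScalars B).fg_iff_finiteType.2 hD⟩, X, g, p, hg, hX,
    hp⟩

lemma HasFGModel.exists_forall_ge (hw : HasFGModel B w) :
    ∃ C₀ : FGSubalgebra B R, ∀ C, C₀ ≤ C → ∃ (X : Scheme.{u}) (g : X ⟶ Spec (.of C.1)) (p : W ⟶ X),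
      LocallyOfFiniteType g ∧ CompactSpace X ∧ IsPullback p w g (specAlgebraMap C.1 R) := by
  obtain ⟨C₀, X, g, p, hg, hX, hp⟩ := hw
  refine ⟨C₀, fun C h ↦ ⟨pullback g (FGSubalgebra.specMap h), pullback.snd _ _,
    pullback.lift p (w ≫ specAlgebraMap C.1 R) ?_, inferInstance,
    QuasiCompact.compactSpace_of_compactSpace (pullback.fst g (FGSubalgebra.specMap h)), ?_⟩⟩
  · rw [Category.assoc, FGSubalgebra.specAlgebraMap_comp_specMap, hp.w]
  · refine .of_right ?_ (pullback.lift_snd _ _ _) (.of_hasPullback g (FGSubalgebra.specMap h))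
    rwa [pullback.lift_fst, FGSubalgebra.specAlgebraMap_comp_specMap]

lemma exists_finiteType_isPushout (B R S : Type u) [CommRing B] [CommRing R] [Algebra B R]
    [CommRing S] [Algebra R S] [Algebra.FinitePresentation R S] :
    ∃ (C : FGSubalgebra B R) (M : Type u) (_ : CommRing M) (_ : Algebra C.1 M) (p : M →+* S),
      Algebra.FiniteType C.1 M ∧
        IsPushout (CommRingCat.ofHom (algebraMap C.1 M)) (CommRingCat.ofHom (algebraMap C.1 R))
          (CommRingCat.ofHom p) (CommRingCat.ofHom (algebraMap R S)) := by
  obtain ⟨n, m, ⟨P⟩⟩ := Algebra.Presentation.exists_presentation_fin (R := R) (S := S)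
  let C : FGSubalgebra B R :=
    ⟨Algebra.adjoin B P.coeffs, P.finite_coeffs.toFinset, by rw [Set.Finite.coe_toFinset]⟩
  have : P.HasCoeffs C.1 := ⟨fun x hx ↦ ⟨⟨x, Algebra.subset_adjoin hx⟩, rfl⟩⟩
  let e := P.tensorModelOfHasCoeffsEquiv C.1
  refine ⟨C, P.ModelOfHasCoeffs C.1, inferInstance, inferInstance,
    e.toAlgHom.toRingHom.comp Algebra.TensorProduct.includeRight.toRingHom, inferInstance, ?_⟩
  refine (CommRingCat.isPushout_tensorProduct C.1 R (P.ModelOfHasCoeffs C.1)).flip.of_iso (.refl _)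
    (.refl _) (.refl _) e.toRingEquiv.toCommRingCatIso (by simp) (by simp) rfl ?_
  ext x
  exact e.commutes x

lemma hasFGModel_of_isAffine [IsAffine W] [LocallyOfFinitePresentation w] : HasFGModel B w := by
  let φ : .of R ⟶ Γ(W, ⊤) := Spec.preimage (W.isoSpec.inv ≫ w)
  let _ : Algebra R Γ(W, ⊤) := φ.hom.toAlgebra
  have hφ : specAlgebraMap R Γ(W, ⊤) = W.isoSpec.inv ≫ w := Spec.map_preimage _
  have : Algebra.FinitePresentation R Γ(W, ⊤) :=
    (HasRingHomProperty.Spec_iff (P := @LocallyOfFinitePresentation) (φ := φ)).1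
      (by rw [Spec.map_preimage]; infer_instance)
  obtain ⟨C, M, _, _, p, hM, hp⟩ := exists_finiteType_isPushout B R Γ(W, ⊤)
  refine ⟨C, Spec (.of M), specAlgebraMap C.1 M, W.isoSpec.hom ≫ Spec.map (CommRingCat.ofHom p),
    HasRingHomProperty.Spec_iff.2 (RingHom.finiteType_algebraMap.2 hM), inferInstance, ?_⟩
  exact (isPullback_SpecMap_of_isPushout _ _ _ _ hp).of_iso W.isoSpec.symm (.refl _) (.refl _)
    (.refl _) (by simp) (by simp [hφ]) (by simp) (by simp)

lemma exists_isPullback_toBaseChange {X : Scheme.{u}} {f : X ⟶ Spec (.of B)} {p : W ⟶ X}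
    (hX : IsPullback p w f (specAlgebraMap B R)) (t : W₁ ⟶ W) [IsOpenImmersion t]
    [CompactSpace W₁] :
    ∃ C₀ : FGSubalgebra B R, ∀ C, C₀ ≤ C →
      ∃ (U : (FGSubalgebra.baseChange f C).Opens) (l : W₁ ⟶ U),
        IsPullback l t U.ι (FGSubalgebra.toBaseChange hX C) := by
  obtain ⟨C₀, h₀⟩ := FGSubalgebra.exists_toBaseChange_preimage_eq hX (U := t.opensRange)
    (isCompact_range t.continuous)
  refine ⟨C₀, fun C h ↦ ?_⟩
  obtain ⟨U, hU⟩ := h₀ C h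
  have ht : Set.range (t ≫ FGSubalgebra.toBaseChange hX C) ⊆ Set.range U.ι := by
    rintro _ ⟨x, rfl⟩
    rw [Scheme.Opens.range_ι]
    exact hU.ge ⟨x, rfl⟩
  exact ⟨U, IsOpenImmersion.lift U.ι _ ht, IsOpenImmersion.isPullback _ _ _ _
    (IsOpenImmersion.lift_fac _ _ _).symm (by rwa [Scheme.Opens.opensRange_ι])⟩

lemma isOpenImmersion_pullbackLift {X U Z S T : Scheme.{u}} {f : X ⟶ S} {b : T ⟶ S} {u : U ⟶ X}
    [IsOpenImmersion u] {a : Z ⟶ U} {z : Z ⟶ T} (h : IsPullback a z (u ≫ f) b) :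
    IsOpenImmersion (pullback.lift (a ≫ u) z (by rw [Category.assoc, h.w]) : Z ⟶ pullback f b) := by
  have hl : IsPullback a (pullback.lift (a ≫ u) z (by rw [Category.assoc, h.w])) u
      (pullback.fst f b) :=
    .of_bot (by rwa [pullback.lift_snd]) (pullback.lift_fst _ _ _).symm (.of_hasPullback f b)
  exact MorphismProperty.of_isPullback (P := @IsOpenImmersion) hl inferInstance

variable {j₁ : W₁ ⟶ W} {j₂ : W₂ ⟶ W} [IsOpenImmersion j₁] [IsOpenImmersion j₂]
  {t₁ : W₁₂ ⟶ W₁} {t₂ : W₁₂ ⟶ W₂}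

lemma hasFGModel_of_isPullback [IsNoetherianRing B] (hj : j₁.opensRange ⊔ j₂.opensRange = ⊤)
    (ht : IsPullback t₁ t₂ j₁ j₂) {X₁ X₂ U₁ U₂ : Scheme.{u}} {f₁ : X₁ ⟶ Spec (.of B)}
    {f₂ : X₂ ⟶ Spec (.of B)} {p₁ : W₁ ⟶ X₁} {p₂ : W₂ ⟶ X₂}
    (h₁ : IsPullback p₁ (j₁ ≫ w) f₁ (specAlgebraMap B R))
    (h₂ : IsPullback p₂ (j₂ ≫ w) f₂ (specAlgebraMap B R))
    [LocallyOfFiniteType f₁] [LocallyOfFiniteType f₂] [CompactSpace X₁] [CompactSpace X₂]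
    {u₁ : U₁ ⟶ X₁} {u₂ : U₂ ⟶ X₂} [IsOpenImmersion u₁] [IsOpenImmersion u₂]
    {l₁ : W₁₂ ⟶ U₁} {l₂ : W₁₂ ⟶ U₂} (hl₁ : IsPullback l₁ t₁ u₁ p₁) (hl₂ : IsPullback l₂ t₂ u₂ p₂) :
    HasFGModel B w := by
  have : IsLocallyNoetherian X₁ := LocallyOfFiniteType.isLocallyNoetherian f₁
  have : IsLocallyNoetherian X₂ := LocallyOfFiniteType.isLocallyNoetherian f₂
  have : CompactSpace U₁ := QuasiCompact.compactSpace_of_compactSpace u₁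
  have : CompactSpace U₂ := QuasiCompact.compactSpace_of_compactSpace u₂
  have : IsLocallyNoetherian U₁ := isLocallyNoetherian_of_isOpenImmersion u₁
  have : IsLocallyNoetherian U₂ := isLocallyNoetherian_of_isOpenImmersion u₂
  have hw : t₁ ≫ j₁ ≫ w = t₂ ≫ j₂ ≫ w := ht.w_assoc w
  have k₁ := hl₁.paste_vert h₁
  have k₂ := hl₂.paste_vert h₂
  rw [← hw] at k₂
  obtain ⟨C, Z, z, s, a, b, hz, ha, hb, rfl, rfl⟩ := FGSubalgebra.exists_common_model k₁ k₂
  -- `U₁` and `U₂` are both models of `W₁₂`, so they become isomorphic to one scheme `Z` over `C`,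
  -- and the base changes of `X₁` and `X₂` to `C` can be glued along `Z`.
  have := isOpenImmersion_pullbackLift ha
  have := isOpenImmersion_pullbackLift hb
  let i₁ : Z ⟶ FGSubalgebra.baseChange f₁ C := pullback.lift (a ≫ u₁) z (by simp [ha.w])
  let i₂ : Z ⟶ FGSubalgebra.baseChange f₂ C := pullback.lift (b ≫ u₂) z (by simp [hb.w])
  have hi₁ : i₁ ≫ pullback.snd _ _ = z := pullback.lift_snd _ _ _
  have hi₂ : i₂ ≫ pullback.snd _ _ = z := pullback.lift_snd _ _ _
  have hg₁ := FGSubalgebra.isPullback_toBaseChange h₁ C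
  have hg₂ := FGSubalgebra.isPullback_toBaseChange h₂ C
  have hs₁ : IsPullback s t₁ i₁ (FGSubalgebra.toBaseChange h₁ C) := by
    refine .of_bot (by rwa [hi₁]) (pullback.hom_ext ?_ ?_) hg₁
    · simpa [i₁] using hl₁.w
    · simpa [hi₁] using hz.w
  have hs₂ : IsPullback s t₂ i₂ (FGSubalgebra.toBaseChange h₂ C) := by
    refine .of_bot (by rwa [hi₂, ← hw]) (pullback.hom_ext ?_ ?_) hg₂
    · simpa [i₂] using hl₂.w
    · simpa [hi₂, ← reassoc_of% hw] using hz.w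
  exact ⟨C, exists_isPullback_of_opensRange_sup_eq_top hj ht (hi₁.trans hi₂.symm) hg₁ hg₂ hs₁ hs₂⟩

lemma hasFGModel_of_opensRange_sup_eq_top [IsNoetherianRing B] [CompactSpace W₁₂]
    (hj : j₁.opensRange ⊔ j₂.opensRange = ⊤) (ht : IsPullback t₁ t₂ j₁ j₂)
    (h₁ : HasFGModel B (j₁ ≫ w)) (h₂ : HasFGModel B (j₂ ≫ w)) : HasFGModel B w := by
  obtain ⟨C₁, h₁⟩ := h₁.exists_forall_ge
  obtain ⟨C₂, h₂⟩ := h₂.exists_forall_ge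
  obtain ⟨C, hC₁, hC₂⟩ := exists_ge_ge C₁ C₂
  obtain ⟨X₁, f₁, p₁, _, _, hX₁⟩ := h₁ C hC₁
  obtain ⟨X₂, f₂, p₂, _, _, hX₂⟩ := h₂ C hC₂
  have : IsOpenImmersion t₁ := MorphismProperty.of_isPullback ht.flip ‹IsOpenImmersion j₂›
  have : IsOpenImmersion t₂ := MorphismProperty.of_isPullback ht ‹IsOpenImmersion j₁›
  obtain ⟨D₁, h₁⟩ := exists_isPullback_toBaseChange hX₁ t₁
  obtain ⟨D₂, h₂⟩ := exists_isPullback_toBaseChange hX₂ t₂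
  obtain ⟨D, hD₁, hD₂⟩ := exists_ge_ge D₁ D₂
  obtain ⟨U₁, l₁, hl₁⟩ := h₁ D hD₁
  obtain ⟨U₂, l₂, hl₂⟩ := h₂ D hD₂
  exact (hasFGModel_of_isPullback hj ht (FGSubalgebra.isPullback_toBaseChange hX₁ D)
    (FGSubalgebra.isPullback_toBaseChange hX₂ D) hl₁ hl₂).trans.trans

lemma hasFGModel_ι_comp [IsNoetherianRing B] [QuasiSeparatedSpace W]
    [LocallyOfFinitePresentation w] {S : W.Opens} (hS : IsCompact (S : Set W)) :
    HasFGModel B (S.ι ≫ w) := by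
  refine compact_open_induction_on (P := fun S ↦ HasFGModel B (S.ι ≫ w)) S hS ?_ fun S hS U hSw ↦ ?_
  · have : IsEmpty (⊥ : W.Opens) := inferInstanceAs (IsEmpty (∅ : Set W))
    exact hasFGModel_of_isAffine
  · have : CompactSpace (S ⊓ U.1 : W.Opens) :=
      isCompact_iff_compactSpace.1 (QuasiSeparatedSpace.inter_isCompact _ _ S.2 hS U.1.2
        U.2.isCompact)
    refine hasFGModel_of_opensRange_sup_eq_top (j₁ := W.homOfLE le_sup_left)
      (j₂ := W.homOfLE le_sup_right) ?_
      (isPullback_opens_inf_le le_sup_left le_sup_right) ?_ ?_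
    · rw [Scheme.opensRange_homOfLE, Scheme.opensRange_homOfLE]
      exact eq_top_iff.2 fun x _ ↦ x.2
    · simpa using hSw
    · rw [Scheme.homOfLE_ι_assoc]; exact hasFGModel_of_isAffine

variable (B) in
lemma hasFGModel [IsNoetherianRing B] (w : W ⟶ Spec (.of R)) [LocallyOfFinitePresentation w]
    [QuasiCompact w] [QuasiSeparated w] : HasFGModel B w := by
  have : CompactSpace W := QuasiCompact.compactSpace_of_compactSpace w
  have : QuasiSeparatedSpace W := quasiSeparatedSpace_of_quasiSeparated w
  obtain ⟨C, X, g, p, hg, hX, hp⟩ := hasFGModel_ι_comp (B := B) (w := w) (S := ⊤) isCompact_univ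
  exact ⟨C, X, g, W.topIso.inv ≫ p, hg, hX,
    hp.of_iso W.topIso (.refl _) (.refl _) (.refl _) (by simp) (by simp) (by simp) (by simp)⟩

end FGModel

/-! ### Descent to an algebraically closed subfield -/

section Descent

attribute [local instance] Algebra.TensorProduct.rightAlgebra in
lemma exists_comp_algebraMap_eq {k A₁ A₂ C Ω : Type*} [Field k] [IsAlgClosed k]
    [CommRing A₁] [Algebra k A₁] [CommRing A₂] [Algebra k A₂] [Algebra.FiniteType k A₂]
    [IsReduced A₂] [IsDomain (A₁ ⊗[k] A₂)] [CommRing C] [Algebra (A₁ ⊗[k] A₂) C]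
    [Algebra.FinitePresentation (A₁ ⊗[k] A₂) C] [FaithfulSMul (A₁ ⊗[k] A₂) C]
    [Algebra A₁ C] [Algebra A₂ C] [IsScalarTower A₁ (A₁ ⊗[k] A₂) C]
    [IsScalarTower A₂ (A₁ ⊗[k] A₂) C] [Field Ω] [IsAlgClosed Ω] [Algebra k Ω] [Algebra A₁ Ω]
    [IsScalarTower k A₁ Ω] [FaithfulSMul A₁ Ω] :
    ∃ (π : A₂ →ₐ[k] k) (φ : C →+* Ω), φ.comp (algebraMap A₁ C) = algebraMap A₁ Ω ∧
      φ.comp (algebraMap A₂ C) = (algebraMap k Ω).comp π.toRingHom := by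
  obtain ⟨π, φ, hφ⟩ := exists_comp_algebraMap_eq_productMap (A₂ := A₂) (C := C)
    (j := IsScalarTower.toAlgHom k A₁ Ω) (FaithfulSMul.algebraMap_injective A₁ Ω)
  refine ⟨π, φ, ?_, ?_⟩
  · rw [IsScalarTower.algebraMap_eq A₁ (A₁ ⊗[k] A₂), ← RingHom.comp_assoc, hφ]
    ext x
    exact Algebra.TensorProduct.productMap_left_apply _ _ x
  · rw [IsScalarTower.algebraMap_eq A₂ (A₁ ⊗[k] A₂), ← RingHom.comp_assoc, hφ]
    ext x
    exact Algebra.TensorProduct.productMap_right_apply _ _ x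

section Injective

variable {k A₁ A₂ Ω : Type*} [Field k] [CommRing A₁] [Algebra k A₁] [CommRing A₂] [Algebra k A₂]
  [CommRing Ω] [Algebra k Ω] {j₁ : A₁ →ₐ[k] Ω} {j₂ : A₂ →ₐ[k] Ω}

lemma injective_left_of_injective_productMap [Nontrivial Ω]
    (h : Function.Injective (Algebra.TensorProduct.productMap j₁ j₂)) : Function.Injective j₁ := by
  have : Nontrivial A₂ := j₂.domain_nontrivial
  rw [← Algebra.TensorProduct.productMap_left j₁ j₂]
  exact h.comp (Algebra.TensorProduct.includeLeft_injective (R := k) (S := k)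
    (algebraMap k A₂).injective)

lemma injective_right_of_injective_productMap [Nontrivial Ω]
    (h : Function.Injective (Algebra.TensorProduct.productMap j₁ j₂)) : Function.Injective j₂ := by
  have : Nontrivial A₁ := j₁.domain_nontrivial
  rw [← Algebra.TensorProduct.productMap_right j₁ j₂]
  exact h.comp (Algebra.TensorProduct.includeRight_injective (R := k)
    (algebraMap k A₁).injective)

lemma injective_productMap_comp_val
    (h : Function.Injective (Algebra.TensorProduct.productMap j₁ j₂)) (C₁ : Subalgebra k A₁)
    (C₂ : Subalgebra k A₂) :
    Function.Injective
      (Algebra.TensorProduct.productMap (j₁.comp C₁.val) (j₂.comp C₂.val)) := by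
  have hC : Algebra.TensorProduct.productMap (j₁.comp C₁.val) (j₂.comp C₂.val) =
      (Algebra.TensorProduct.productMap j₁ j₂).comp (Algebra.TensorProduct.map C₁.val C₂.val) := by
    ext <;> simp
  rw [hC]
  exact h.comp (TensorProduct.map_injective_of_flat_flat C₁.val.toLinearMap C₂.val.toLinearMap
    Subtype.val_injective Subtype.val_injective)

end Injective

lemma FGSubalgebra.exists_common_model_of_isScalarTower {A₁ A₂ T Ω : Type u} [CommRing A₁]
    [CommRing A₂] [CommRing T] [CommRing Ω] [Algebra A₁ T] [Algebra A₂ T]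
    [Algebra T Ω] [Algebra A₁ Ω] [Algebra A₂ Ω] [IsScalarTower A₁ T Ω] [IsScalarTower A₂ T Ω]
    {V X₁ X₂ : Scheme.{u}} {f : V ⟶ Spec (.of Ω)} {f₁ : X₁ ⟶ Spec (.of A₁)}
    {f₂ : X₂ ⟶ Spec (.of A₂)} {p₁ : V ⟶ X₁} {p₂ : V ⟶ X₂}
    (h₁ : IsPullback p₁ f f₁ (specAlgebraMap A₁ Ω)) (h₂ : IsPullback p₂ f f₂ (specAlgebraMap A₂ Ω))
    [LocallyOfFinitePresentation f₁] [LocallyOfFinitePresentation f₂] [CompactSpace X₁]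
    [QuasiSeparatedSpace X₁] [CompactSpace X₂] [QuasiSeparatedSpace X₂] :
    ∃ (C : FGSubalgebra T Ω) (Z : Scheme.{u}) (z : Z ⟶ Spec (.of C.1)) (a₁ : Z ⟶ X₁)
      (a₂ : Z ⟶ X₂), IsPullback a₁ z f₁ (specAlgebraMap A₁ C.1) ∧
        IsPullback a₂ z f₂ (specAlgebraMap A₂ C.1) := by
  rw [← specAlgebraMap_comp _ T] at h₁ h₂
  have t₁ := IsPullback.of_hasPullback f₁ (specAlgebraMap A₁ T)
  have t₂ := IsPullback.of_hasPullback f₂ (specAlgebraMap A₂ T)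
  have : QuasiSeparatedSpace ↥(pullback f₁ (specAlgebraMap A₁ T)) :=
    quasiSeparatedSpace_of_quasiSeparated (pullback.fst _ _)
  have : QuasiSeparatedSpace ↥(pullback f₂ (specAlgebraMap A₂ T)) :=
    quasiSeparatedSpace_of_quasiSeparated (pullback.fst _ _)
  obtain ⟨C, Z, z, -, a₁, a₂, -, ha₁, ha₂, -, -⟩ :=
    exists_common_model (.of_right' h₁ t₁) (.of_right' h₂ t₂)
  refine ⟨C, Z, z, a₁ ≫ pullback.fst _ _, a₂ ≫ pullback.fst _ _, ?_, ?_⟩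
  · rw [← specAlgebraMap_comp A₁ T C.1]
    exact ha₁.paste_horiz t₁
  · rw [← specAlgebraMap_comp A₂ T C.1]
    exact ha₂.paste_horiz t₂

variable {V X₁ X₂ : Scheme.{u}}

lemma exists_isPullback_of_comp_algebraMap_eq {k A₁ A₂ C Ω : Type u} [CommRing k] [CommRing A₁]
    [CommRing A₂] [CommRing C] [CommRing Ω] [Algebra k Ω] [Algebra A₁ C] [Algebra A₂ C]
    [Algebra A₁ Ω] {f : V ⟶ Spec (.of Ω)} {f₁ : X₁ ⟶ Spec (.of A₁)} {f₂ : X₂ ⟶ Spec (.of A₂)}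
    {Z : Scheme.{u}} {z : Z ⟶ Spec (.of C)} {p₁ : V ⟶ X₁} {a₁ : Z ⟶ X₁} {a₂ : Z ⟶ X₂}
    (h₁ : IsPullback p₁ f f₁ (specAlgebraMap A₁ Ω))
    (ha₁ : IsPullback a₁ z f₁ (specAlgebraMap A₁ C))
    (ha₂ : IsPullback a₂ z f₂ (specAlgebraMap A₂ C)) {φ : C →+* Ω} {π : A₂ →+* k}
    (hφ₁ : φ.comp (algebraMap A₁ C) = algebraMap A₁ Ω)
    (hφ₂ : φ.comp (algebraMap A₂ C) = (algebraMap k Ω).comp π) :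
    ∃ p : V ⟶ pullback f₂ (Spec.map (CommRingCat.ofHom π)),
      IsPullback p f (pullback.snd _ _) (specAlgebraMap k Ω) := by
  have hφ₁' : Spec.map (CommRingCat.ofHom φ) ≫ specAlgebraMap A₁ C = specAlgebraMap A₁ Ω := by
    rw [← Spec.map_comp, ← CommRingCat.ofHom_comp, hφ₁]
  have hφ₂' : Spec.map (CommRingCat.ofHom φ) ≫ specAlgebraMap A₂ C =
      specAlgebraMap k Ω ≫ Spec.map (CommRingCat.ofHom π) := by
    rw [← Spec.map_comp, ← Spec.map_comp, ← CommRingCat.ofHom_comp, ← CommRingCat.ofHom_comp, hφ₂]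
  rw [← hφ₁'] at h₁
  have hV := (IsPullback.of_right' h₁ ha₁).paste_horiz ha₂
  rw [hφ₂'] at hV
  exact ⟨_, .of_right' hV (.of_hasPullback _ _)⟩

variable {k Ω : Type u} [Field k] [IsAlgClosed k] [Field Ω] [IsAlgClosed Ω] [Algebra k Ω]
  {A₁ A₂ : Type u} [CommRing A₁] [Algebra k A₁] [CommRing A₂] [Algebra k A₂] [Algebra A₁ Ω]
  [Algebra A₂ Ω] [IsScalarTower k A₁ Ω] [IsScalarTower k A₂ Ω] {f : V ⟶ Spec (.of Ω)}
  {f₁ : X₁ ⟶ Spec (.of A₁)} {f₂ : X₂ ⟶ Spec (.of A₂)} {p₁ : V ⟶ X₁} {p₂ : V ⟶ X₂}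

lemma exists_isPullback_of_injective_productMap [IsNoetherianRing A₁] [Algebra.FiniteType k A₂]
    (hA : Function.Injective (Algebra.TensorProduct.productMap (IsScalarTower.toAlgHom k A₁ Ω)
      (IsScalarTower.toAlgHom k A₂ Ω)))
    (h₁ : IsPullback p₁ f f₁ (specAlgebraMap A₁ Ω)) (h₂ : IsPullback p₂ f f₂ (specAlgebraMap A₂ Ω))
    [LocallyOfFiniteType f₁] [LocallyOfFiniteType f₂] [CompactSpace X₁] [CompactSpace X₂] :
    ∃ (V₀ : Scheme.{u}) (f₀ : V₀ ⟶ Spec (.of k)) (p : V ⟶ V₀), LocallyOfFiniteType f₀ ∧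
      QuasiCompact f₀ ∧ IsPullback p f f₀ (specAlgebraMap k Ω) := by
  let j₁ := IsScalarTower.toAlgHom k A₁ Ω
  let j₂ := IsScalarTower.toAlgHom k A₂ Ω
  let _ : Algebra A₂ (A₁ ⊗[k] A₂) := Algebra.TensorProduct.rightAlgebra
  let _ : Algebra (A₁ ⊗[k] A₂) Ω := (Algebra.TensorProduct.productMap j₁ j₂).toAlgebra
  have : IsScalarTower A₁ (A₁ ⊗[k] A₂) Ω :=
    .of_algebraMap_eq fun x ↦ (Algebra.TensorProduct.productMap_left_apply j₁ j₂ x).symm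
  have : IsScalarTower A₂ (A₁ ⊗[k] A₂) Ω :=
    .of_algebraMap_eq fun x ↦ (Algebra.TensorProduct.productMap_right_apply j₁ j₂ x).symm
  have : FaithfulSMul A₁ Ω := (faithfulSMul_iff_algebraMap_injective _ _).2
    (injective_left_of_injective_productMap hA)
  have : IsReduced A₂ := isReduced_of_injective j₂ (injective_right_of_injective_productMap hA)
  have : IsDomain (A₁ ⊗[k] A₂) := hA.isDomain
  have : IsNoetherianRing A₂ := Algebra.FiniteType.isNoetherianRing k A₂
  have : IsNoetherianRing (A₁ ⊗[k] A₂) := Algebra.FiniteType.isNoetherianRing A₁ _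
  have : IsLocallyNoetherian X₁ := LocallyOfFiniteType.isLocallyNoetherian f₁
  have : IsLocallyNoetherian X₂ := LocallyOfFiniteType.isLocallyNoetherian f₂
  obtain ⟨C, Z, z, a₁, a₂, ha₁, ha₂⟩ :=
    FGSubalgebra.exists_common_model_of_isScalarTower (T := A₁ ⊗[k] A₂) h₁ h₂
  have : Algebra.FinitePresentation (A₁ ⊗[k] A₂) C.1 :=
    Algebra.FinitePresentation.of_finiteType.1 (C.1.fg_iff_finiteType.1 C.2)
  have : FaithfulSMul (A₁ ⊗[k] A₂) C.1 :=
    (faithfulSMul_iff_algebraMap_injective _ _).2 (.of_comp (f := algebraMap C.1 Ω) hA)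
  obtain ⟨π, φ, hφ₁, hφ₂⟩ := exists_comp_algebraMap_eq (k := k) (A₁ := A₁) (A₂ := A₂) (C := C.1)
    (Ω := Ω)
  obtain ⟨p, hp⟩ := exists_isPullback_of_comp_algebraMap_eq h₁ ha₁ ha₂ hφ₁ hφ₂
  exact ⟨_, _, p, inferInstance, inferInstance, hp⟩

lemma diagonal_of_isPullback {C : Type*} [Category* C] [HasPullbacks C] {P Q : MorphismProperty C}
    [P.DescendsAlong Q] [P.RespectsIso] [Q.IsStableUnderBaseChange] {X Y S T : C} {p : Y ⟶ X}
    {g : Y ⟶ T} {f : X ⟶ S} {s : T ⟶ S} (h : IsPullback p g f s) (hs : Q s) (hg : P.diagonal g) :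
    P.diagonal f :=
  MorphismProperty.of_isPullback_of_descendsAlong h.flip hs hg

lemma isSeparated_of_isPullback {X Y S T : Scheme.{u}} {p : Y ⟶ X} {g : Y ⟶ T} {f : X ⟶ S}
    {s : T ⟶ S} (h : IsPullback p g f s) [Surjective s] [Flat s] [QuasiCompact s]
    [IsSeparated g] : IsSeparated f := by
  have : (@Surjective ⊓ @Flat : MorphismProperty Scheme.{u}).IsStableUnderBaseChange := .inf
  have : (@Surjective ⊓ @Flat ⊓ @QuasiCompact :
    MorphismProperty Scheme.{u}).IsStableUnderBaseChange := .inf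
  have := universallyClosed_respectsIso.{u}
  have : UniversallyClosed (pullback.diagonal f) :=
    diagonal_of_isPullback (P := @UniversallyClosed) (Q := @Surjective ⊓ @Flat ⊓ @QuasiCompact) h
      ⟨⟨‹_›, ‹_›⟩, ‹_›⟩ (inferInstanceAs (UniversallyClosed (pullback.diagonal g)))
  exact ⟨.of_isPreimmersion _ (pullback.diagonal f).isClosedMap.isClosed_range⟩

theorem exists_model_of_two_linearlyDisjoint_models_general
    (hA : Function.Injective (Algebra.TensorProduct.productMap (IsScalarTower.toAlgHom k A₁ Ω)
      (IsScalarTower.toAlgHom k A₂ Ω)))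
    (h₁ : IsPullback p₁ f f₁ (specAlgebraMap A₁ Ω)) (h₂ : IsPullback p₂ f f₂ (specAlgebraMap A₂ Ω))
    [LocallyOfFinitePresentation f₁] [QuasiCompact f₁] [QuasiSeparated f₁]
    [LocallyOfFinitePresentation f₂] [QuasiCompact f₂] [QuasiSeparated f₂] [IsSeparated f] :
    ∃ (V₀ : Scheme.{u}) (f₀ : V₀ ⟶ Spec (.of k)) (p : V ⟶ V₀), IsSeparated f₀ ∧
      LocallyOfFiniteType f₀ ∧ QuasiCompact f₀ ∧ IsPullback p f f₀ (specAlgebraMap k Ω) := by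
  obtain ⟨C₁, Y₁, g₁, q₁, _, _, hq₁⟩ := hasFGModel k f₁
  obtain ⟨C₂, Y₂, g₂, q₂, _, _, hq₂⟩ := hasFGModel k f₂
  have hC : Function.Injective (Algebra.TensorProduct.productMap
      (IsScalarTower.toAlgHom k C₁.1 Ω) (IsScalarTower.toAlgHom k C₂.1 Ω)) :=
    injective_productMap_comp_val hA C₁.1 C₂.1
  have : Algebra.FiniteType k C₂.1 := C₂.1.fg_iff_finiteType.1 C₂.2
  have h₁' := h₁.paste_horiz hq₁
  have h₂' := h₂.paste_horiz hq₂
  rw [specAlgebraMap_comp] at h₁' h₂'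
  obtain ⟨V₀, f₀, p, ht, hc, hp⟩ := exists_isPullback_of_injective_productMap hC h₁' h₂'
  exact ⟨V₀, f₀, p, isSeparated_of_isPullback hp, ht, hc, hp⟩

lemma isPullback_of_iso {X Y S T : Scheme.{u}} {f : X ⟶ S} {b : T ⟶ S} {w : Y ⟶ T}
    (e : Y ≅ pullback f b) (he : e.hom ≫ pullback.snd f b = w) :
    IsPullback (e.hom ≫ pullback.fst f b) w f b :=
  (IsPullback.of_hasPullback f b).of_iso e.symm (.refl _) (.refl _) (.refl _) (by simp)
    (by simp [← he]) (by simp) (by simp)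

end Descent

/-- Let `Ω ⊇ k` be algebraically closed fields and let `V` be an algebraic
scheme (separated and of finite type) over `Ω`.  If `V` has models over two
subfields `K₁, K₂` of `Ω` that are finitely generated over `k` and linearly
disjoint over `k`, then `V` has a model over `k`. -/
theorem exists_model_of_two_linearlyDisjoint_models
    {k Ω : Type u} [Field k] [IsAlgClosed k] [Field Ω] [IsAlgClosed Ω]
    [Algebra k Ω]
    (K₁ K₂ : IntermediateField k Ω) (hK₁ : K₁.FG) (hK₂ : K₂.FG)
    (hdisj : Function.Injective (Algebra.TensorProduct.productMap K₁.val K₂.val))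
    (V : Scheme.{u}) (f : V ⟶ Spec (CommRingCat.of Ω))
    [IsSeparated f] [LocallyOfFiniteType f] [QuasiCompact f]
    (V₁ : Scheme.{u}) (f₁ : V₁ ⟶ Spec (CommRingCat.of K₁))
    [IsSeparated f₁] [LocallyOfFiniteType f₁] [QuasiCompact f₁]
    (e₁ : V ≅ pullback f₁ (Spec.map (CommRingCat.ofHom (algebraMap K₁ Ω))))
    (he₁ : e₁.hom ≫ pullback.snd f₁ (Spec.map (CommRingCat.ofHom (algebraMap K₁ Ω))) = f)
    (V₂ : Scheme.{u}) (f₂ : V₂ ⟶ Spec (CommRingCat.of K₂))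
    [IsSeparated f₂] [LocallyOfFiniteType f₂] [QuasiCompact f₂]
    (e₂ : V ≅ pullback f₂ (Spec.map (CommRingCat.ofHom (algebraMap K₂ Ω))))
    (he₂ : e₂.hom ≫ pullback.snd f₂ (Spec.map (CommRingCat.ofHom (algebraMap K₂ Ω))) = f) :
    ∃ (V₀ : Scheme.{u}) (f₀ : V₀ ⟶ Spec (CommRingCat.of k)),
      IsSeparated f₀ ∧ LocallyOfFiniteType f₀ ∧ QuasiCompact f₀ ∧
      ∃ e₀ : V ≅ pullback f₀ (Spec.map (CommRingCat.ofHom (algebraMap k Ω))),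
        e₀.hom ≫ pullback.snd f₀ (Spec.map (CommRingCat.ofHom (algebraMap k Ω))) = f := by
  obtain ⟨V₀, f₀, p, hs, ht, hc, hp⟩ := exists_model_of_two_linearlyDisjoint_models_general hdisj
    (isPullback_of_iso e₁ he₁) (isPullback_of_iso e₂ he₂)
  exact ⟨V₀, f₀, hs, ht, hc, hp.isoPullback, hp.isoPullback_hom_snd⟩
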